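/- For any core matching K with k = k(K) ≥ 2 crossings, the potential Φ(K) = Σ_{i>1} (2i−3)·n_i(K) satisfies Φ(K) ≤ 2k − 3, with equality if and only if n_1(K) = 3k, n_k(K) = 1, and n_i(K) = 0 for all i ∉ {1, k}. -/

import Mathlib

/-- Two chords `(p.1, p.2)` and `(q.1, q.2)` of a circle with vertices labeled
`0, 1, …, n-1` in circular order interleave, i.e. cross, when
`p.1 < q.1 < p.2 < q.2`. -/
def Interleaves {n : ℕ} (p q : Fin n × Fin n) : Prop :=
  p.1 < q.1 ∧ q.1 < p.2 ∧ p.2 < q.2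

instance {n : ℕ} (p q : Fin n × Fin n) : Decidable (Interleaves p q) :=
  inferInstanceAs (Decidable (_ ∧ _ ∧ _))

/-- The number of crossings of a set of chords (each chord recorded with its
endpoints in increasing order): the number of unordered pairs of chords whose
endpoints interleave around the circle. -/
def crossNum {n : ℕ} (D : Finset (Fin n × Fin n)) : ℕ :=
  ((D ×ˢ D).filter fun pq => Interleaves pq.1 pq.2).card

/-- A perfect matching of the `n` points `0, …, n-1` on a circle: a set of
chords, each recorded with increasing endpoints, such that every vertex
belongs to exactly one chord. -/
structure CircMatching (n : ℕ) where
  chords : Finset (Fin n × Fin n)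
  lt : ∀ p ∈ chords, p.1 < p.2
  mem_unique : ∀ v : Fin n, ∃! p, p ∈ chords ∧ (p.1 = v ∨ p.2 = v)


/-- Two chords cross when their endpoints interleave, in either order. -/
def CrossRel {n : ℕ} (p q : Fin n × Fin n) : Prop :=
  Interleaves p q ∨ Interleaves q p

/-- A core matching: a perfect matching in which every chord is involved in at
least one crossing. -/
def IsCoreMatching {n : ℕ} (M : CircMatching n) : Prop :=
  ∀ p ∈ M.chords, ∃ q ∈ M.chords, CrossRel p q

/-- The `n` points on the unit circle, labeled in circular order. -/
noncomputable def circPt (n : ℕ) (j : Fin n) : ℂ :=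
  Complex.exp (2 * (Real.pi : ℂ) * Complex.I * ((j : ℕ) : ℂ) / ((n : ℕ) : ℂ))

/-- The chord of the unit circle joining the points labeled `p.1` and `p.2`,
as a segment in the plane. -/
noncomputable def chordSeg (n : ℕ) (p : Fin n × Fin n) : Set ℂ :=
  segment ℝ (circPt n p.1) (circPt n p.2)

/-- The complement of a set of chords in the closed unit disk. -/
noncomputable def diskComplement {n : ℕ} (D : Finset (Fin n × Fin n)) : Set ℂ :=
  Metric.closedBall (0 : ℂ) 1 \ ⋃ p ∈ D, chordSeg n p

/-- The regions of a set of chords: the connected components of the complement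
of the chords in the closed unit disk. -/
noncomputable def regions {n : ℕ} (D : Finset (Fin n × Fin n)) : Set (Set ℂ) :=
  {C | ∃ x ∈ diskComplement D, C = connectedComponentIn (diskComplement D) x}

/-- The number of boundary arcs of a region: the number of connected components
of its intersection with the unit circle. -/
noncomputable def arcCount (C : Set ℂ) : ℕ :=
  Nat.card (ConnectedComponents ↥(C ∩ Metric.sphere (0 : ℂ) 1))

/-- `nReg D i` is the number `nᵢ` of regions of the chord configuration `D`
having exactly `i` boundary arcs. -/
noncomputable def nReg {n : ℕ} (D : Finset (Fin n × Fin n)) (i : ℕ) : ℕ :=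
  Nat.card {C : Set ℂ // C ∈ regions D ∧ arcCount C = i}

/-! Every region touching the circle is determined by the arcs on its boundary, and two arcs bound
the same region exactly when they lie on the same side of every chord. If `a < b` are arcs of one
region, starting at the points `a` and `b`, then no chord, and hence no crossing, has endpoints both
in `(a, b]` and outside it. So `b` is the last endpoint of a crossing avoiding the point `0`. As
some crossing contains `0`, the number of arcs that repeat the region of an earlier arc is less than
`k`, i.e. `n - ∑ nᵢ < k`.

Since `(2i - 3) + 1 + 2 = 2i`, the potential plus the number of regions with at least two arcs is
`2 (n - ∑ nᵢ) ≤ 2 (k - 1)`. Equality forces one such region, which then has `k` arcs. These cut the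
points into `k` blocks, each containing the four endpoints of a crossing, so `4k ≤ n`, while
`n ≤ 4k` because every point lies on a crossing chord; thus `n = 4k` and `n₁ = n - k = 3k`. -/

section FiberCount

open Finset

variable {α β : Type*} [Fintype α] (f : α → β)

/-- The number of nonempty fibers of `f` with exactly `i` elements. -/
noncomputable def fiberCount (i : ℕ) : ℕ :=
  {b ∈ Set.range f | (f ⁻¹' {b}).ncard = i}.ncard

theorem fiberCount_eq_card_filter [DecidableEq β] (i : ℕ) :
    fiberCount f i = #{b ∈ univ.image f | #{a | f a = b} = i} := by
  have hfiber : ∀ b, (f ⁻¹' {b}).ncard = #{a | f a = b} := by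
    intro b
    rw [← Set.ncard_coe_finset, coe_filter_univ]
    rfl
  rw [fiberCount, ← Set.ncard_coe_finset]
  simp_rw [hfiber, coe_filter, mem_image_univ_iff_mem_range]

theorem mapsTo_card_fiber [DecidableEq β] :
    Set.MapsTo (fun b => #{a | f a = b}) (univ.image f : Finset β)
      (Icc 1 (Fintype.card α) : Finset ℕ) := by
  intro b hb
  obtain ⟨a, -, rfl⟩ := mem_image.mp hb
  exact mem_Icc.mpr ⟨card_pos.mpr ⟨a, by simp⟩, card_le_univ _⟩

theorem sum_fiberCount :
    ∑ i ∈ Icc 1 (Fintype.card α), fiberCount f i = (Set.range f).ncard := by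
  classical
  simp_rw [fiberCount_eq_card_filter, ← card_eq_sum_card_fiberwise (mapsTo_card_fiber f)]
  rw [← Set.ncard_coe_finset, coe_image, coe_univ, Set.image_univ]

theorem sum_mul_fiberCount :
    ∑ i ∈ Icc 1 (Fintype.card α), i * fiberCount f i = Fintype.card α := by
  classical
  calc ∑ i ∈ Icc 1 (Fintype.card α), i * fiberCount f i
      = ∑ i ∈ Icc 1 (Fintype.card α), ∑ b ∈ univ.image f with #{a | f a = b} = i, i := by
        simp_rw [fiberCount_eq_card_filter, sum_const, smul_eq_mul, mul_comm]
    _ = ∑ b ∈ univ.image f, #{a | f a = b} :=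
        sum_fiberwise_of_maps_to' (mapsTo_card_fiber f) _
    _ = Fintype.card α := (card_eq_sum_card_image f univ).symm

theorem card_le_ncard_range_add_card_repeated [LinearOrder α]
    [DecidablePred fun a => ∃ b < a, f b = f a] :
    Fintype.card α ≤ (Set.range f).ncard + #{a | ∃ b < a, f b = f a} := by
  have hinj : Set.InjOn f {a | ¬∃ b < a, f b = f a} := by
    intro a ha b hb hab
    push Not at ha hb
    rcases lt_trichotomy a b with h | h | h
    · exact absurd hab (hb a h)
    · exact h
    · exact absurd hab.symm (ha b h)
  have hcard : #{a | ¬∃ b < a, f b = f a} ≤ (Set.range f).ncard := by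
    rw [← Set.ncard_coe_finset, coe_filter_univ, ← hinj.ncard_image]
    exact Set.ncard_le_ncard (Set.image_subset_range f _) (Set.finite_range f)
  rw [← card_univ, ← card_filter_add_card_filter_not (fun a => ∃ b < a, f b = f a), add_comm]
  gcongr

end FiberCount

section Potential

open Finset

variable {N : ℕ → ℕ} {n k : ℕ}

/-- The potential of a configuration with `N i` regions having `i` boundary arcs, none of which has
more than `n` boundary arcs. -/
def potential (N : ℕ → ℕ) (n : ℕ) : ℕ :=
  ∑ i ∈ Icc 2 n, (2 * i - 3) * N i

theorem sum_Icc_one_eq_add (g : ℕ → ℕ) (hn : 1 ≤ n) :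
    ∑ i ∈ Icc 1 n, g i = g 1 + ∑ i ∈ Icc 2 n, g i :=
  (add_sum_Ioc_eq_sum_Icc hn).symm

theorem potential_add_sum (N : ℕ → ℕ) (n : ℕ) :
    potential N n + ∑ i ∈ Icc 2 n, N i + 2 * ∑ i ∈ Icc 1 n, N i = 2 * ∑ i ∈ Icc 1 n, i * N i := by
  rcases n.eq_zero_or_pos with rfl | hn
  · rfl
  have hterm : ∀ i ∈ Icc 2 n, (2 * i - 3) * N i + N i + 2 * N i = 2 * (i * N i) := by
    intro i hi
    obtain ⟨j, rfl⟩ := Nat.exists_eq_add_of_le (mem_Icc.mp hi).1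
    rw [show 2 * (2 + j) - 3 = 2 * j + 1 by omega]
    ring
  have hsum := sum_congr rfl hterm
  simp only [sum_add_distrib, ← mul_sum] at hsum
  rw [sum_Icc_one_eq_add _ hn, sum_Icc_one_eq_add _ hn, potential]
  omega

theorem potential_eq_of_forall_ne {m : ℕ} (hm : m ∈ Icc 2 n)
    (hN : ∀ i ∈ Icc 2 n, i ≠ m → N i = 0) : potential N n = (2 * m - 3) * N m :=
  sum_eq_single_of_mem m hm fun i hi him => by rw [hN i hi him, mul_zero]

theorem potential_le (hlt : ∑ i ∈ Icc 1 n, i * N i < ∑ i ∈ Icc 1 n, N i + k) :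
    potential N n ≤ 2 * k - 3 := by
  have hadd := potential_add_sum N n
  rcases Nat.eq_zero_or_pos (∑ i ∈ Icc 2 n, N i) with hzero | hpos
  · have : potential N n = 0 :=
      sum_eq_zero fun i hi => by rw [sum_eq_zero_iff.mp hzero i hi, mul_zero]
    omega
  · omega

theorem exists_eq_one_of_sum_eq_one {ι : Type*} {s : Finset ι} {g : ι → ℕ}
    (hsum : ∑ i ∈ s, g i = 1) : ∃ m ∈ s, g m = 1 ∧ ∀ i ∈ s, i ≠ m → g i = 0 := by
  classical
  obtain ⟨m, hm, hgm⟩ := exists_ne_zero_of_sum_ne_zero (hsum.trans_ne one_ne_zero)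
  have hsplit := add_sum_erase s g hm
  have hrest : ∑ i ∈ s.erase m, g i = 0 := by omega
  exact ⟨m, hm, by omega, fun i hi him => sum_eq_zero_iff.mp hrest i (mem_erase.mpr ⟨him, hi⟩)⟩

theorem potential_eq_iff (hlt : ∑ i ∈ Icc 1 n, i * N i < ∑ i ∈ Icc 1 n, N i + k) (hk : 2 ≤ k)
    (hN : ∀ i, n < i → N i = 0) :
    potential N n = 2 * k - 3 ↔ N k = 1 ∧ ∀ i, 1 ≤ i → i ≠ 1 → i ≠ k → N i = 0 := by
  constructor
  · intro heq
    have hadd := potential_add_sum N n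
    have hone : ∑ i ∈ Icc 2 n, N i = 1 := by omega
    obtain ⟨m, hm, hNm, hother⟩ := exists_eq_one_of_sum_eq_one hone
    have hpot := potential_eq_of_forall_ne hm hother
    obtain rfl : m = k := by
      rw [hNm] at hpot
      have := (mem_Icc.mp hm).1
      omega
    refine ⟨hNm, fun i hi hi1 him => ?_⟩
    rcases lt_or_ge n i with hni | hin
    · exact hN i hni
    · exact hother i (mem_Icc.mpr ⟨by omega, hin⟩) him
  · rintro ⟨hNk, hother⟩
    have hkn : k ≤ n := by
      by_contra! hnk
      exact one_ne_zero (hNk.symm.trans (hN k hnk))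
    rw [potential_eq_of_forall_ne (mem_Icc.mpr ⟨hk, hkn⟩) fun i hi hik => ?_, hNk, mul_one]
    have := (mem_Icc.mp hi).1
    exact hother i (by omega) (by omega) hik

end Potential

section Crossings

open Finset

variable {n : ℕ} {D : Finset (Fin n × Fin n)} {c : (Fin n × Fin n) × (Fin n × Fin n)}

/-- The crossings of a set of chords, each recorded as the pair of its chords, the one with the
smaller initial point first. -/
def crossings (D : Finset (Fin n × Fin n)) : Finset ((Fin n × Fin n) × (Fin n × Fin n)) :=
  {c ∈ D ×ˢ D | Interleaves c.1 c.2}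

/-- The four endpoints of a pair of chords. -/
def endpoints (c : (Fin n × Fin n) × (Fin n × Fin n)) : Finset (Fin n) :=
  {c.1.1, c.1.2, c.2.1, c.2.2}

theorem mem_crossings : c ∈ crossings D ↔ c.1 ∈ D ∧ c.2 ∈ D ∧ Interleaves c.1 c.2 := by
  simp only [crossings, mem_filter, mem_product, and_assoc]

theorem card_endpoints (hc : Interleaves c.1 c.2) : #(endpoints c) = 4 := by
  obtain ⟨h₁, h₂, h₃⟩ := hc
  have hne₁ : c.1.1 ∉ ({c.1.2, c.2.1, c.2.2} : Finset (Fin n)) := by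
    simp [h₁.ne, (h₁.trans h₂).ne, (h₁.trans (h₂.trans h₃)).ne]
  have hne₂ : c.1.2 ∉ ({c.2.1, c.2.2} : Finset (Fin n)) := by
    simp [h₂.ne', h₃.ne]
  rw [endpoints, card_insert_of_notMem hne₁, card_insert_of_notMem hne₂, card_pair (h₂.trans h₃).ne]

theorem mem_endpoints_le (hc : Interleaves c.1 c.2) {v : Fin n} (hv : v ∈ endpoints c) :
    c.1.1 ≤ v ∧ v ≤ c.2.2 := by
  obtain ⟨h₁, h₂, h₃⟩ := hc
  simp only [endpoints, mem_insert, mem_singleton] at hv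
  omega

/-- The chords of `D` separating the arc from `j` to `j + 1` from the arc from `n - 1` to `0`. -/
def chordsOver (D : Finset (Fin n × Fin n)) (j : Fin n) : Finset (Fin n × Fin n) :=
  {p ∈ D | p.1 ≤ j ∧ j < p.2}

theorem mem_Ioc_iff_of_chordsOver_eq {a b : Fin n} (hab : chordsOver D a = chordsOver D b)
    {p : Fin n × Fin n} (hp : p ∈ D) (hlt : p.1 < p.2) : p.1 ∈ Ioc a b ↔ p.2 ∈ Ioc a b := by
  have hiff : p.1 ≤ a ∧ a < p.2 ↔ p.1 ≤ b ∧ b < p.2 := by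
    simpa [chordsOver, hp] using Finset.ext_iff.mp hab p
  simp only [mem_Ioc]
  omega

theorem endpoints_subset_Ioc {a b : Fin n} (hab : chordsOver D a = chordsOver D b)
    (hc : c ∈ crossings D) {v : Fin n} (hv : v ∈ endpoints c) (hvab : v ∈ Ioc a b) :
    endpoints c ⊆ Ioc a b := by
  obtain ⟨hp, hq, h₁, h₂, h₃⟩ := mem_crossings.mp hc
  have hpab := mem_Ioc_iff_of_chordsOver_eq hab hp (h₁.trans h₂)
  have hqab := mem_Ioc_iff_of_chordsOver_eq hab hq (h₂.trans h₃)
  intro w hw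
  simp only [endpoints, mem_insert, mem_singleton, mem_Ioc] at *
  omega

end Crossings

section CoreMatching

open Finset

variable {n : ℕ} {M : CircMatching n} (hcore : IsCoreMatching M)
include hcore

theorem exists_crossing_mem_endpoints (v : Fin n) : ∃ c ∈ crossings M.chords, v ∈ endpoints c := by
  obtain ⟨p, ⟨hp, hpv⟩, -⟩ := M.mem_unique v
  obtain ⟨q, hq, hpq | hqp⟩ := hcore p hp
  · refine ⟨(p, q), mem_crossings.mpr ⟨hp, hq, hpq⟩, ?_⟩
    rcases hpv with rfl | rfl <;> simp [endpoints]
  · refine ⟨(q, p), mem_crossings.mpr ⟨hq, hp, hqp⟩, ?_⟩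
    rcases hpv with rfl | rfl <;> simp [endpoints]

theorem card_points_le_four_mul_crossNum : n ≤ 4 * crossNum M.chords := by
  have hcover : univ ⊆ (crossings M.chords).biUnion endpoints := fun v _ =>
    mem_biUnion.mpr (exists_crossing_mem_endpoints hcore v)
  calc n = #(univ : Finset (Fin n)) := (card_fin n).symm
    _ ≤ #((crossings M.chords).biUnion endpoints) := card_le_card hcover
    _ ≤ crossNum M.chords * 4 :=
        card_biUnion_le_card_mul _ _ _ fun c hc => (card_endpoints (mem_crossings.mp hc).2.2).le
    _ = 4 * crossNum M.chords := mul_comm _ _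

/-- The arcs of `S` cut the circle into blocks that no chord leaves, and each of these contains the
endpoints of a crossing. -/
theorem four_mul_card_le {S : Finset (Fin n)}
    (hS : ∀ a ∈ S, ∀ b ∈ S, chordsOver M.chords a = chordsOver M.chords b) : 4 * #S ≤ n := by
  choose c hc hmem using exists_crossing_mem_endpoints hcore
  have hdisj_lt : ∀ a ∈ S, ∀ b ∈ S, a < b → Disjoint (endpoints (c a)) (endpoints (c b)) := by
    intro a ha b hb hab
    refine disjoint_left.mpr fun v hva hvb => ?_
    have hv : v ∈ Ioc a b :=
      endpoints_subset_Ioc (hS a ha b hb) (hc b) (hmem b) (right_mem_Ioc.mpr hab) hvb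
    exact left_notMem_Ioc (endpoints_subset_Ioc (hS a ha b hb) (hc a) hva hv (hmem a))
  have hdisj : (S : Set (Fin n)).PairwiseDisjoint fun a => endpoints (c a) := by
    intro a ha b hb hne
    rcases hne.lt_or_gt with hab | hba
    · exact hdisj_lt a ha b hb hab
    · exact (hdisj_lt b hb a ha hba).symm
  calc 4 * #S = ∑ a ∈ S, #(endpoints (c a)) := by
        simp [card_endpoints (mem_crossings.mp (hc _)).2.2, mul_comm]
    _ = #(S.biUnion fun a => endpoints (c a)) := (card_biUnion hdisj).symm
    _ ≤ n := card_finset_fin_le _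

/-- The starting point of a repeated arc is the largest endpoint of a crossing that avoids the point
`0`, while some crossing contains `0`. -/
theorem card_repeated_chordsOver_lt_crossNum (hn : 0 < n) :
    #{a | ∃ b < a, chordsOver M.chords b = chordsOver M.chords a} < crossNum M.chords := by
  have := NeZero.of_pos hn
  have hsub : ({a | ∃ b < a, chordsOver M.chords b = chordsOver M.chords a} : Finset (Fin n)) ⊆
      image (fun c => c.2.2) {c ∈ crossings M.chords | c.1.1 ≠ 0} := by
    intro a ha
    obtain ⟨b, hba, hover⟩ := (mem_filter.mp ha).2
    obtain ⟨c, hc, hac⟩ := exists_crossing_mem_endpoints hcore a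
    have hIoc := endpoints_subset_Ioc hover hc hac (right_mem_Ioc.mpr hba)
    have hfirst : b < c.1.1 := (mem_Ioc.mp (hIoc (by simp [endpoints]))).1
    have hlast : c.2.2 ≤ a := (mem_Ioc.mp (hIoc (by simp [endpoints]))).2
    have hle := (mem_endpoints_le (mem_crossings.mp hc).2.2 hac).2
    exact mem_image.mpr ⟨c, mem_filter.mpr ⟨hc, (Fin.zero_le b |>.trans_lt hfirst).ne'⟩,
      hlast.antisymm hle⟩
  have hssub : {c ∈ crossings M.chords | c.1.1 ≠ 0} ⊂ crossings M.chords := by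
    obtain ⟨c, hc, hzero⟩ := exists_crossing_mem_endpoints hcore 0
    have hfirst := (mem_endpoints_le (mem_crossings.mp hc).2.2 hzero).1
    exact filter_ssubset.mpr ⟨c, hc, not_not.mpr (hfirst.antisymm (Fin.zero_le _))⟩
  calc _ ≤ #{c ∈ crossings M.chords | c.1.1 ≠ 0} := (card_le_card hsub).trans card_image_le
    _ < crossNum M.chords := card_lt_card hssub

theorem lt_ncard_range_add_crossNum (hn : 0 < n) {β : Type*} {f : Fin n → β}
    (hf : ∀ a b, f a = f b → chordsOver M.chords a = chordsOver M.chords b) :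
    n < (Set.range f).ncard + crossNum M.chords := by
  classical
  calc n = Fintype.card (Fin n) := (Fintype.card_fin n).symm
    _ ≤ (Set.range f).ncard + #{a | ∃ b < a, f b = f a} := card_le_ncard_range_add_card_repeated f
    _ ≤ (Set.range f).ncard + #{a | ∃ b < a, chordsOver M.chords b = chordsOver M.chords a} := by
        gcongr with a
        exact hf _ _
    _ < (Set.range f).ncard + crossNum M.chords := by
        gcongr
        exact card_repeated_chordsOver_lt_crossNum hcore hn

end CoreMatching

section AffineArrangement

variable {E ι : Type*} [AddCommGroup E] [Module ℝ E] [TopologicalSpace E] [IsTopologicalAddGroup E]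
  [ContinuousSMul ℝ E] {K : Set E} {f : ι → E →ᴬ[ℝ] ℝ} {x : E}

/-- The points of the same sign pattern as `x` are convex, and no `f i` changes sign on a connected
set avoiding its zeros. -/
theorem connectedComponentIn_affine_ne_zero (hK : Convex ℝ K) (hxK : x ∈ K)
    (hx : ∀ i, f i x ≠ 0) :
    connectedComponentIn {z ∈ K | ∀ i, f i z ≠ 0} x = {z ∈ K | ∀ i, 0 < f i x * f i z} := by
  have hxmem : x ∈ {z ∈ K | ∀ i, f i z ≠ 0} := ⟨hxK, hx⟩
  apply Set.Subset.antisymm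
  · intro z hz
    refine ⟨(connectedComponentIn_subset _ _ hz).1, fun i => ?_⟩
    by_contra! hneg
    have hcont : Continuous fun w => f i x * f i w := continuous_const.mul (f i).cont
    obtain ⟨w, hw, hw0⟩ := isPreconnected_connectedComponentIn.intermediate_value hz
      (mem_connectedComponentIn hxmem) hcont.continuousOn ⟨hneg, mul_self_nonneg _⟩
    exact mul_ne_zero (hx i) ((connectedComponentIn_subset _ _ hw).2 i) hw0
  · have hconv : Convex ℝ {z ∈ K | ∀ i, 0 < f i x * f i z} := by
      have hinter : {z ∈ K | ∀ i, 0 < f i x * f i z} =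
          K ∩ ⋂ i, (f i x • (f i : E →ᵃ[ℝ] ℝ)) ⁻¹' Set.Ioi 0 := by
        ext z
        simp
      rw [hinter]
      exact hK.inter (convex_iInter fun i => (convex_Ioi 0).affine_preimage _)
    refine hconv.isPreconnected.subset_connectedComponentIn ⟨hxK, fun i => ?_⟩ fun z hz =>
      ⟨hz.1, fun i => right_ne_zero_of_mul (hz.2 i).ne'⟩
    exact mul_self_pos.mpr (hx i)

end AffineArrangement

section ChordSide

open Complex

/-- The real affine functional vanishing on the line through `u` and `v`; its sign tells on which
side of that line a point lies. -/
noncomputable def chordSide (u v : ℂ) : ℂ →ᴬ[ℝ] ℝ where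
  toFun z := ((z - u) / (u - v)).im
  linear := imLm ∘ₗ LinearMap.mulRight ℝ (u - v)⁻¹
  map_vadd' z w := by simp [div_eq_mul_inv, add_sub_assoc, add_mul]
  cont := by fun_prop

theorem chordSide_apply (u v z : ℂ) : chordSide u v z = ((z - u) / (u - v)).im := rfl

theorem chordSide_left (u v : ℂ) : chordSide u v u = 0 := by
  simp [chordSide_apply]

theorem chordSide_right (u v : ℂ) : chordSide u v v = 0 := by
  rcases eq_or_ne u v with rfl | huv
  · exact chordSide_left u u
  · rw [chordSide_apply, ← neg_sub u v, neg_div, div_self (sub_ne_zero.mpr huv), neg_im, one_im,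
      neg_zero]

theorem mem_segment_iff_chordSide_eq_zero {c u v z : ℂ} {r : ℝ} (huv : u ≠ v)
    (hu : u ∈ Metric.sphere c r) (hv : v ∈ Metric.sphere c r) (hz : z ∈ Metric.closedBall c r) :
    z ∈ segment ℝ u v ↔ chordSide u v z = 0 := by
  constructor
  · rw [segment_eq_image_lineMap]
    rintro ⟨t, -, rfl⟩
    simp [chordSide_left, chordSide_right]
  · intro hzero
    have hcol : Collinear ℝ {u, z, v} := by
      refine collinear_iff_of_mem (p₀ := u) (by simp) |>.mpr ⟨u - v, ?_⟩
      simp only [Set.mem_insert_iff, Set.mem_singleton_iff, forall_eq_or_imp, forall_eq]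
      refine ⟨⟨0, by simp⟩, ⟨((z - u) / (u - v)).re, ?_⟩, ⟨-1, by simp⟩⟩
      have hreal : (((z - u) / (u - v)).re : ℂ) = (z - u) / (u - v) :=
        Complex.ext rfl hzero.symm
      rw [real_smul, hreal, div_mul_cancel₀ _ (sub_ne_zero.mpr huv), vadd_eq_add, sub_add_cancel]
    exact mem_segment_iff_wbtw.mpr (hcol.wbtw_of_dist_eq_of_dist_le hu hz hv huv)

theorem circleMap_sub_circleMap (R a b : ℝ) :
    circleMap 0 R a - circleMap 0 R b =
      2 * I * Real.sin ((a - b) / 2) * circleMap 0 R ((a + b) / 2) := by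
  have ha : (a : ℂ) * I = ((a + b) / 2 : ℝ) * I + ((a - b) / 2 : ℝ) * I := by push_cast; ring
  have hb : (b : ℂ) * I = ((a + b) / 2 : ℝ) * I + -(((a - b) / 2 : ℝ) * I) := by push_cast; ring
  have hsin := two_sin ((a - b) / 2 : ℝ)
  rw [neg_mul] at hsin
  simp only [circleMap_zero, ha, hb, exp_add, ofReal_sin]
  linear_combination (-I * R * cexp (((a + b) / 2 : ℝ) * I)) * hsin -
    R * cexp (((a + b) / 2 : ℝ) * I) *
      (cexp (-(((a - b) / 2 : ℝ) * I)) - cexp (((a - b) / 2 : ℝ) * I)) * I_sq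

theorem chordSide_circleMap {R : ℝ} (hR : R ≠ 0) (α β θ : ℝ) :
    chordSide (circleMap 0 R α) (circleMap 0 R β) (circleMap 0 R θ) =
      Real.sin ((θ - α) / 2) * Real.sin ((β - θ) / 2) / Real.sin ((β - α) / 2) := by
  have hratio : circleMap 0 R ((θ + α) / 2) / circleMap 0 R ((α + β) / 2) =
      cexp (((θ - β) / 2 : ℝ) * I) := by
    rw [circleMap_zero, circleMap_zero, mul_div_mul_left _ _ (ofReal_ne_zero.mpr hR), ← exp_sub]
    congr 1
    push_cast
    ring
  have hsin : (2 * I * Real.sin ((θ - α) / 2)) / (2 * I * Real.sin ((α - β) / 2)) =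
      ((Real.sin ((θ - α) / 2) / Real.sin ((α - β) / 2) : ℝ) : ℂ) := by
    rw [mul_div_mul_left _ _ (mul_ne_zero two_ne_zero I_ne_zero), ofReal_div]
  rw [chordSide_apply, circleMap_sub_circleMap, circleMap_sub_circleMap, mul_div_mul_comm, hratio,
    hsin, im_ofReal_mul, exp_ofReal_mul_I_im, ← neg_sub β θ, ← neg_sub β α, neg_div, neg_div,
    Real.sin_neg, Real.sin_neg, div_neg, neg_mul_neg, div_mul_eq_mul_div]

end ChordSide

section Arcs

open scoped Real

variable {n : ℕ}

/-- The point of the unit circle at position `t`, in units of the distance between consecutive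
points of the configuration. -/
noncomputable def circleAt (n : ℕ) (t : ℝ) : ℂ :=
  circleMap 0 1 (2 * π * t / n)

/-- The open arc of the unit circle between the consecutive points `j` and `j + 1`. -/
noncomputable def openArc (n j : ℕ) : Set ℂ :=
  circleAt n '' Set.Ioo j (j + 1)

/-- The midpoint of the arc between the points `j` and `j + 1`. -/
noncomputable def arcMid (n j : ℕ) : ℂ :=
  circleAt n (j + 1 / 2)

theorem circPt_eq_circleAt (j : Fin n) : circPt n j = circleAt n (j : ℕ) := by
  rw [circPt, circleAt, circleMap_zero, Complex.ofReal_one, one_mul]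
  congr 1
  push_cast
  ring

theorem continuous_circleAt (n : ℕ) : Continuous (circleAt n) :=
  (continuous_circleMap 0 1).comp (by fun_prop)

theorem circleAt_mem_sphere (n : ℕ) (t : ℝ) : circleAt n t ∈ Metric.sphere (0 : ℂ) 1 :=
  circleMap_mem_sphere 0 zero_le_one _

theorem openArc_subset_sphere (n j : ℕ) : openArc n j ⊆ Metric.sphere (0 : ℂ) 1 :=
  Set.image_subset_iff.mpr fun t _ => circleAt_mem_sphere n t

theorem isPreconnected_openArc (n j : ℕ) : IsPreconnected (openArc n j) :=
  isPreconnected_Ioo.image _ (continuous_circleAt n).continuousOn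

theorem arcMid_mem_openArc (n j : ℕ) : arcMid n j ∈ openArc n j :=
  Set.mem_image_of_mem _ ⟨by norm_num, by norm_num⟩

theorem periodic_circleAt (hn : 0 < n) : Function.Periodic (circleAt n) n := by
  intro t
  have : (n : ℝ) ≠ 0 := by positivity
  rw [circleAt, circleAt, ← periodic_circleMap 0 1 (2 * π * t / n)]
  congr 1
  field_simp

theorem exists_eq_circPt_or_mem_openArc (hn : 0 < n) {z : ℂ}
    (hz : z ∈ Metric.sphere (0 : ℂ) 1) : ∃ j : Fin n, z = circPt n j ∨ z ∈ openArc n j := by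
  have hn' : (0 : ℝ) < n := by positivity
  obtain ⟨θ, rfl⟩ : z ∈ Set.range (circleMap 0 1) := by rwa [range_circleMap, abs_one]
  obtain ⟨t, ht, heq⟩ := (periodic_circleAt hn).exists_mem_Ico₀ hn' (θ * n / (2 * π))
  have hθ : circleMap 0 1 θ = circleAt n t := by
    rw [← heq, circleAt]
    congr 1
    field_simp
  have hfloor : ⌊t⌋₊ < n := (Nat.floor_lt ht.1).mpr ht.2
  refine ⟨⟨⌊t⌋₊, hfloor⟩, ?_⟩
  rw [hθ, circPt_eq_circleAt]
  rcases (Nat.floor_le ht.1).eq_or_lt with hfl | hfl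
  · exact Or.inl (by rw [hfl])
  · exact Or.inr ⟨t, ⟨hfl, Nat.lt_floor_add_one t⟩, rfl⟩

theorem chordSide_circleAt (n : ℕ) (a b t : ℝ) :
    chordSide (circleAt n a) (circleAt n b) (circleAt n t) =
      Real.sin (π * ((t - a) / n)) * Real.sin (π * ((b - t) / n)) /
        Real.sin (π * ((b - a) / n)) := by
  have hhalf (x y : ℝ) : (2 * π * x / n - 2 * π * y / n) / 2 = π * ((x - y) / n) := by ring
  rw [circleAt, circleAt, circleAt, chordSide_circleMap one_ne_zero, hhalf, hhalf, hhalf]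

theorem sin_pi_mul_div_pos {x y : ℝ} (hx : 0 < x) (hxy : x < y) : 0 < Real.sin (π * (x / y)) :=
  Real.sin_pos_of_pos_of_lt_pi (mul_pos Real.pi_pos (div_pos hx (hx.trans hxy)))
    (mul_lt_of_lt_one_right Real.pi_pos ((div_lt_one (hx.trans hxy)).mpr hxy))

theorem sin_pi_mul_div_neg {x y : ℝ} (hx : x < 0) (hxy : -y < x) : Real.sin (π * (x / y)) < 0 := by
  have hpos := sin_pi_mul_div_pos (neg_pos.mpr hx) (neg_lt.mp hxy)
  rwa [neg_div, mul_neg, Real.sin_neg, neg_pos] at hpos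

section Sides

variable {a b j : ℕ} {z : ℂ}

theorem chordSide_pos_of_mem_openArc (haj : a ≤ j) (hjb : j < b) (hba : b < a + n)
    (hz : z ∈ openArc n j) : 0 < chordSide (circleAt n a) (circleAt n b) z := by
  obtain ⟨t, ⟨hjt, htj⟩, rfl⟩ := hz
  rify at haj hba
  have hjb' : (j : ℝ) + 1 ≤ b := by exact_mod_cast hjb
  rw [chordSide_circleAt]
  exact div_pos (mul_pos (sin_pi_mul_div_pos (by linarith) (by linarith))
    (sin_pi_mul_div_pos (by linarith) (by linarith)))
    (sin_pi_mul_div_pos (by linarith) (by linarith))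

theorem chordSide_neg_of_mem_openArc (hab : a < b) (hbn : b ≤ n) (hba : b < a + n) (hjn : j < n)
    (hj : j < a ∨ b ≤ j) (hz : z ∈ openArc n j) :
    chordSide (circleAt n a) (circleAt n b) z < 0 := by
  obtain ⟨t, ⟨hjt, htj⟩, rfl⟩ := hz
  have : (0 : ℝ) ≤ j := j.cast_nonneg
  have : (0 : ℝ) ≤ a := a.cast_nonneg
  have hjn' : (j : ℝ) + 1 ≤ n := by exact_mod_cast hjn
  rify at hab hbn hba
  rw [chordSide_circleAt]
  refine div_neg_of_neg_of_pos ?_ (sin_pi_mul_div_pos (by linarith) (by linarith))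
  rcases hj with hja | hbj
  · have hja' : (j : ℝ) + 1 ≤ a := by exact_mod_cast hja
    exact mul_neg_of_neg_of_pos (sin_pi_mul_div_neg (by linarith) (by linarith))
      (sin_pi_mul_div_pos (by linarith) (by linarith))
  · rify at hbj
    exact mul_neg_of_pos_of_neg (sin_pi_mul_div_pos (by linarith) (by linarith))
      (sin_pi_mul_div_neg (by linarith) (by linarith))

theorem circleAt_ne_circleAt (hab : a < b) (hba : b < a + n) : circleAt n a ≠ circleAt n b := by
  intro heq
  have hpos := chordSide_pos_of_mem_openArc le_rfl hab hba (arcMid_mem_openArc n a)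
  rw [heq, chordSide_apply, sub_self, div_zero] at hpos
  exact lt_irrefl 0 hpos

theorem chordSide_pos_iff_of_mem_openArc (hab : a < b) (hbn : b ≤ n) (hba : b < a + n)
    (hjn : j < n) (hz : z ∈ openArc n j) :
    0 < chordSide (circleAt n a) (circleAt n b) z ↔ a ≤ j ∧ j < b := by
  refine ⟨fun hpos => ?_, fun hj => chordSide_pos_of_mem_openArc hj.1 hj.2 hba hz⟩
  by_contra! hj
  exact hpos.not_gt (chordSide_neg_of_mem_openArc hab hbn hba hjn
    ((lt_or_ge j a).imp_right hj) hz)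

theorem chordSide_ne_zero_of_mem_openArc (hab : a < b) (hbn : b ≤ n) (hba : b < a + n)
    (hjn : j < n) (hz : z ∈ openArc n j) : chordSide (circleAt n a) (circleAt n b) z ≠ 0 := by
  by_cases hj : a ≤ j ∧ j < b
  · exact (chordSide_pos_of_mem_openArc hj.1 hj.2 hba hz).ne'
  · exact (chordSide_neg_of_mem_openArc hab hbn hba hjn (by omega) hz).ne

end Sides

end Arcs

section OpenArcUnion

variable {n : ℕ} {i j : Fin n} {z : ℂ} {S : Set (Fin n)}

theorem chordSide_succ_pos_iff (hn : 2 ≤ n) (hz : z ∈ openArc n j) :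
    0 < chordSide (circleAt n i) (circleAt n (i + 1 : ℕ)) z ↔ i = j := by
  rw [chordSide_pos_iff_of_mem_openArc (by omega) (by omega) (by omega) j.2 hz]
  omega

theorem chordSide_succ_ne_zero (hn : 2 ≤ n) (hz : z ∈ openArc n j) :
    chordSide (circleAt n i) (circleAt n (i + 1 : ℕ)) z ≠ 0 :=
  chordSide_ne_zero_of_mem_openArc (by omega) (by omega) (by omega) j.2 hz

theorem mem_openArc_iff_chordSide_pos (hn : 2 ≤ n) (hz : z ∈ openArc n j) :
    z ∈ openArc n i ↔ 0 < chordSide (circleAt n i) (circleAt n (i + 1 : ℕ)) z := by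
  refine ⟨fun hi => (chordSide_succ_pos_iff hn hi).mpr rfl, fun hpos => ?_⟩
  rwa [(chordSide_succ_pos_iff hn hz).mp hpos]

theorem isClopen_preimage_openArc (hn : 2 ≤ n) {X : Set ℂ} (hX : X ⊆ ⋃ j : Fin n, openArc n j)
    (i : Fin n) : IsClopen ((↑) ⁻¹' openArc n i : Set X) := by
  let side := chordSide (circleAt n i) (circleAt n (i + 1 : ℕ))
  have hcont : Continuous fun z : X => side z := side.cont.comp continuous_subtype_val
  have hpos : ((↑) ⁻¹' openArc n i : Set X) = {z : X | 0 < side z} := by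
    ext z
    obtain ⟨j, hj⟩ := Set.mem_iUnion.mp (hX z.2)
    exact mem_openArc_iff_chordSide_pos hn hj
  have hnonneg : {z : X | 0 < side z} = {z : X | 0 ≤ side z} := by
    ext z
    obtain ⟨j, hj⟩ := Set.mem_iUnion.mp (hX z.2)
    exact (chordSide_succ_ne_zero hn hj).symm.le_iff_lt.symm
  rw [hpos]
  exact ⟨hnonneg ▸ isClosed_le continuous_const hcont, isOpen_lt continuous_const hcont⟩

theorem disjoint_openArc (hn : 2 ≤ n) (hij : i ≠ j) : Disjoint (openArc n i) (openArc n j) :=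
  Set.disjoint_left.mpr fun _ hi hj =>
    hij ((chordSide_succ_pos_iff hn hj).mp ((chordSide_succ_pos_iff hn hi).mpr rfl))

theorem card_connectedComponents_iUnion_openArc (hn : 2 ≤ n) (S : Set (Fin n)) :
    Nat.card (ConnectedComponents ↥(⋃ j : S, openArc n (j : Fin n))) = S.ncard := by
  let X : Set ℂ := ⋃ j : S, openArc n (j : Fin n)
  let arc (j : S) : Set X := (↑) ⁻¹' openArc n (j : Fin n)
  have hsub (j : S) : openArc n (j : Fin n) ⊆ X := Set.subset_iUnion_of_subset j subset_rfl
  have hclopen (j : S) : IsClopen (arc j) :=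
    isClopen_preimage_openArc hn (X := X) (Set.iUnion_subset fun j =>
      Set.subset_iUnion (fun j : Fin n => openArc n j) j) j
  have hdisj : Pairwise (Function.onFun Disjoint arc) := fun i j hij =>
    (disjoint_openArc hn (Subtype.coe_injective.ne hij)).preimage _
  have hunion : ⋃ j, arc j = Set.univ := by
    rw [← Set.preimage_iUnion]
    exact Subtype.coe_preimage_self X
  have hconn (j : S) : IsConnected (arc j) := by
    refine ⟨⟨⟨_, hsub j (arcMid_mem_openArc n _)⟩, arcMid_mem_openArc n _⟩, ?_⟩
    rw [← Topology.IsInducing.subtypeVal.isPreconnected_image, Subtype.image_preimage_coe,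
      Set.inter_eq_self_of_subset_right (hsub j)]
    exact isPreconnected_openArc n _
  exact Nat.card_congr
    (ConnectedComponents.equivOfIsClopenOfIsConnected hclopen hdisj hunion hconn)

end OpenArcUnion

section Regions

open Finset

variable {n : ℕ} {D : Finset (Fin n × Fin n)} (hD : ∀ p ∈ D, p.1 < p.2)

/-- The region of the disk that has the arc between the points `j` and `j + 1` on its boundary. -/
noncomputable def arcRegion (D : Finset (Fin n × Fin n)) (j : Fin n) : Set ℂ :=
  connectedComponentIn (diskComplement D) (arcMid n j)

include hD

theorem diskComplement_eq : diskComplement D =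
    {z ∈ Metric.closedBall 0 1 | ∀ p : D, chordSide (circPt n p.1.1) (circPt n p.1.2) z ≠ 0} := by
  ext z
  simp only [diskComplement, Set.mem_sdiff, Set.mem_iUnion₂, not_exists, Set.mem_ofPred_eq,
    Subtype.forall]
  refine and_congr_right fun hz => forall₂_congr fun p hp => ?_
  have hne : circPt n p.1 ≠ circPt n p.2 := by
    rw [circPt_eq_circleAt, circPt_eq_circleAt]
    exact circleAt_ne_circleAt (hD p hp) (by omega)
  rw [chordSeg, mem_segment_iff_chordSide_eq_zero hne _ _ hz] <;>
    exact circPt_eq_circleAt (n := n) _ ▸ circleAt_mem_sphere n _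

theorem openArc_subset_diskComplement (j : Fin n) : openArc n j ⊆ diskComplement D := by
  intro z hz
  rw [diskComplement_eq hD]
  refine ⟨Metric.sphere_subset_closedBall (openArc_subset_sphere n j hz), fun p => ?_⟩
  rw [circPt_eq_circleAt, circPt_eq_circleAt]
  exact chordSide_ne_zero_of_mem_openArc (hD p p.2) (by omega) (by omega) j.2 hz

theorem openArc_subset_arcRegion (j : Fin n) : openArc n j ⊆ arcRegion D j :=
  (isPreconnected_openArc n j).subset_connectedComponentIn (arcMid_mem_openArc n j)
    (openArc_subset_diskComplement hD j)

theorem chordsOver_eq_of_arcRegion_eq {i j : Fin n} (hij : arcRegion D i = arcRegion D j) :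
    chordsOver D i = chordsOver D j := by
  have hmem : arcMid n i ∈ arcRegion D j :=
    hij ▸ openArc_subset_arcRegion hD i (arcMid_mem_openArc n i)
  have hj := openArc_subset_diskComplement hD j (arcMid_mem_openArc n j)
  rw [arcRegion, diskComplement_eq hD] at hmem
  rw [diskComplement_eq hD] at hj
  rw [connectedComponentIn_affine_ne_zero (convex_closedBall 0 1) hj.1 hj.2] at hmem
  refine filter_congr fun p hp => ?_
  have hside := pos_iff_pos_of_mul_pos (hmem.2 ⟨p, hp⟩)
  rw [circPt_eq_circleAt, circPt_eq_circleAt,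
    chordSide_pos_iff_of_mem_openArc (hD p hp) (by omega) (by omega) j.2 (arcMid_mem_openArc n j),
    chordSide_pos_iff_of_mem_openArc (hD p hp) (by omega) (by omega) i.2 (arcMid_mem_openArc n i)]
    at hside
  exact hside.symm

end Regions

section MatchingRegions

theorem CircMatching.two_le {n : ℕ} (M : CircMatching n) (hn : 0 < n) : 2 ≤ n := by
  obtain ⟨p, ⟨hp, -⟩, -⟩ := M.mem_unique ⟨0, hn⟩
  have := M.lt p hp
  omega

variable {n : ℕ} (M : CircMatching n) {C : Set ℂ}

theorem circPt_notMem_diskComplement (j : Fin n) : circPt n j ∉ diskComplement M.chords := by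
  obtain ⟨p, ⟨hp, hpj⟩, -⟩ := M.mem_unique j
  refine fun hj => hj.2 (Set.mem_biUnion hp ?_)
  rcases hpj with rfl | rfl
  · exact left_mem_segment ℝ _ _
  · exact right_mem_segment ℝ _ _

theorem inter_sphere_eq_iUnion_openArc (hn : 0 < n) (hC : C ∈ regions M.chords) :
    C ∩ Metric.sphere 0 1 =
      ⋃ j : arcRegion M.chords ⁻¹' {C}, openArc n (j : Fin n) := by
  obtain ⟨x, -, rfl⟩ := hC
  ext z
  rw [Set.mem_iUnion]
  constructor
  · rintro ⟨hzC, hz⟩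
    obtain ⟨j, rfl | hj⟩ := exists_eq_circPt_or_mem_openArc hn hz
    · exact absurd (connectedComponentIn_subset _ _ hzC) (circPt_notMem_diskComplement M j)
    · have hzj := openArc_subset_arcRegion M.lt j hj
      exact ⟨⟨j, (connectedComponentIn_eq hzj).trans (connectedComponentIn_eq hzC).symm⟩, hj⟩
  · rintro ⟨⟨j, hjC⟩, hj⟩
    exact ⟨hjC ▸ openArc_subset_arcRegion M.lt j hj, openArc_subset_sphere n j hj⟩

theorem arcCount_eq_ncard (hn : 0 < n) (hC : C ∈ regions M.chords) :
    arcCount C = (arcRegion M.chords ⁻¹' {C}).ncard := by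
  rw [arcCount, inter_sphere_eq_iUnion_openArc M hn hC,
    card_connectedComponents_iUnion_openArc (M.two_le hn)]

theorem nReg_eq_fiberCount (hn : 0 < n) {i : ℕ} (hi : 1 ≤ i) :
    nReg M.chords i = fiberCount (arcRegion M.chords) i := by
  have hset : {C | C ∈ regions M.chords ∧ arcCount C = i} =
      {C ∈ Set.range (arcRegion M.chords) | (arcRegion M.chords ⁻¹' {C}).ncard = i} := by
    ext C
    constructor
    · rintro ⟨hC, rfl⟩
      rw [arcCount_eq_ncard M hn hC] at hi ⊢
      obtain ⟨j, hj⟩ := Set.nonempty_of_ncard_ne_zero (Nat.one_le_iff_ne_zero.mp hi)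
      exact ⟨⟨j, hj⟩, rfl⟩
    · rintro ⟨⟨j, rfl⟩, hcard⟩
      have hreg : arcRegion M.chords j ∈ regions M.chords :=
        ⟨_, openArc_subset_diskComplement M.lt j (arcMid_mem_openArc n j), rfl⟩
      exact ⟨hreg, (arcCount_eq_ncard M hn hreg).trans hcard⟩
  rw [nReg, fiberCount, ← hset]
  exact Nat.card_coe_set_eq _

end MatchingRegions

section CoreRegions

open Finset

variable {n k : ℕ} {M : CircMatching n}

theorem sum_mul_nReg (hn : 0 < n) : ∑ i ∈ Icc 1 n, i * nReg M.chords i = n := by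
  have hsum := sum_mul_fiberCount (arcRegion M.chords)
  rw [Fintype.card_fin] at hsum
  refine Eq.trans (sum_congr rfl fun i hi => ?_) hsum
  rw [nReg_eq_fiberCount M hn (mem_Icc.mp hi).1]

theorem sum_nReg (hn : 0 < n) :
    ∑ i ∈ Icc 1 n, nReg M.chords i = (Set.range (arcRegion M.chords)).ncard := by
  have hsum := sum_fiberCount (arcRegion M.chords)
  rw [Fintype.card_fin] at hsum
  exact (sum_congr rfl fun i hi => nReg_eq_fiberCount M hn (mem_Icc.mp hi).1).trans hsum

theorem four_mul_le_of_nReg_ne_zero (hcore : IsCoreMatching M) (hn : 0 < n) {i : ℕ} (hi : 1 ≤ i)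
    (hne : nReg M.chords i ≠ 0) : 4 * i ≤ n := by
  classical
  rw [nReg_eq_fiberCount M hn hi] at hne
  obtain ⟨C, -, rfl⟩ := Set.nonempty_of_ncard_ne_zero hne
  rw [Set.ncard_eq_toFinset_card']
  refine four_mul_card_le hcore fun a ha b hb => chordsOver_eq_of_arcRegion_eq M.lt ?_
  rw [Set.mem_toFinset] at ha hb
  exact Eq.trans ha (Eq.symm hb)

theorem nReg_one_eq (hcore : IsCoreMatching M) (hk : crossNum M.chords = k) (hn : 0 < n)
    (hk2 : 2 ≤ k) (hNk : nReg M.chords k = 1)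
    (hN : ∀ i, 1 ≤ i → i ≠ 1 → i ≠ k → nReg M.chords i = 0) : nReg M.chords 1 = 3 * k := by
  have hfour : 4 * k ≤ n :=
    four_mul_le_of_nReg_ne_zero hcore hn (by omega) (hNk.trans_ne one_ne_zero)
  have hpoints : n ≤ 4 * k := hk ▸ card_points_le_four_mul_crossNum hcore
  have hlarge : ∑ i ∈ Icc 2 n, i * nReg M.chords i = k * nReg M.chords k :=
    sum_eq_single_of_mem k (mem_Icc.mpr ⟨hk2, by omega⟩) fun i hi hik => by
      have := (mem_Icc.mp hi).1
      rw [hN i (by omega) (by omega) hik, mul_zero]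
  have hsum := sum_mul_nReg (M := M) hn
  rw [sum_Icc_one_eq_add _ hn, hlarge, hNk] at hsum
  omega

end CoreRegions

/-- For any core matching `K` with `k = k(K) ≥ 2` crossings, the potential
`Φ(K) = Σ_{i>1} (2i−3)·nᵢ(K)` satisfies `Φ(K) ≤ 2k − 3`, with equality if and
only if `n₁(K) = 3k`, `n_k(K) = 1`, and `nᵢ(K) = 0` for all `i ∉ {1, k}`
(`i` ranging over the positive integers; a region of a matching has at most `n`
boundary arcs, so the sum over `1 < i ≤ n` is the full potential). -/
theorem coreMatching_potential_le {n k : ℕ} (M : CircMatching n)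
    (hcore : IsCoreMatching M) (hk : crossNum M.chords = k) (hk2 : 2 ≤ k) :
    (∑ i ∈ Finset.Icc 2 n, (2 * i - 3) * nReg M.chords i) ≤ 2 * k - 3 ∧
    ((∑ i ∈ Finset.Icc 2 n, (2 * i - 3) * nReg M.chords i) = 2 * k - 3 ↔
      (nReg M.chords 1 = 3 * k ∧ nReg M.chords k = 1 ∧
        ∀ i : ℕ, 1 ≤ i → i ≠ 1 → i ≠ k → nReg M.chords i = 0)) := by
  have hn : 0 < n := by
    obtain ⟨c, -⟩ := Finset.card_pos.mp (show 0 < crossNum M.chords by omega)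
    exact Fin.pos c.1.1
  have hlt : ∑ i ∈ Finset.Icc 1 n, i * nReg M.chords i <
      ∑ i ∈ Finset.Icc 1 n, nReg M.chords i + k := by
    rw [sum_mul_nReg hn, sum_nReg hn, ← hk]
    exact lt_ncard_range_add_crossNum hcore hn fun _ _ => chordsOver_eq_of_arcRegion_eq M.lt
  have hlarge : ∀ i, n < i → nReg M.chords i = 0 := by
    intro i hi
    by_contra hne
    have := four_mul_le_of_nReg_ne_zero hcore hn (by omega) hne
    omega
  refine ⟨potential_le hlt, (potential_eq_iff hlt hk2 hlarge).trans
    ⟨fun h => ⟨nReg_one_eq hcore hk hn hk2 h.1 h.2, h⟩, And.right⟩⟩
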